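/- Fix θ > 0 and define the symplectic pairing σ(x,y) = (2/θ)·(x₁y₂ − x₂y₁ + x₃y₄ − x₄y₃) for x, y ∈ ℝ⁴. Let p be even, q be odd, 1 ≤ p < q, and let y₁, …, y_q, E ∈ ℝ⁴ satisfy the contracted-line constraint y_p − y_{p+1} + y_{p+2} − ⋯ − y_q = E (i.e. Σ_{k=p}^{q} (−1)^{k−p} y_k = E). Define z ∈ (ℝ⁴)^{q−1} by z_i = y_i for 1 ≤ i ≤ p−1 and z_i = y_{i+1} for p ≤ i ≤ q−1. Then Σ_{1≤i<j≤p} (−1)^{i+j+1} σ(y_i, y_j) + Σ_{p≤i<j≤q} (−1)^{i+j+1} σ(y_i, y_j) = Σ_{1≤i<j≤q−1} (−1)^{i+j+1} σ(z_i, z_j) + σ( E , Σ_{j=p+1}^{q} (−1)^{j+1} y_j − Σ_{i=1}^{p−1} (−1)^{i+1} y_i ). -/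

import Mathlib

open Finset

/-- The symplectic pairing `x·θ⁻¹·y` on `ℝ⁴`. -/
noncomputable def symplecticPairing (θ : ℝ) (x y : EuclideanSpace ℝ (Fin 4)) : ℝ :=
  (2 / θ) * (x 0 * y 1 - x 1 * y 0 + x 2 * y 3 - x 3 * y 2)

noncomputable def spB (θ : ℝ) :
    EuclideanSpace ℝ (Fin 4) →ₗ[ℝ] EuclideanSpace ℝ (Fin 4) →ₗ[ℝ] ℝ :=
  LinearMap.mk₂ ℝ (symplecticPairing θ)
    (by intro a b c; simp [symplecticPairing]; ring)
    (by intro a b c; simp [symplecticPairing]; ring)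
    (by intro a b c; simp [symplecticPairing]; ring)
    (by intro a b c; simp [symplecticPairing]; ring)

theorem spB_apply (θ : ℝ) (x y : EuclideanSpace ℝ (Fin 4)) :
    symplecticPairing θ x y = spB θ x y := rfl

theorem spB_anti (θ : ℝ) (x y : EuclideanSpace ℝ (Fin 4)) :
    spB θ x y = - spB θ y x := by
  simp only [← spB_apply, symplecticPairing]; ring

noncomputable def spT (θ : ℝ) (f : ℕ → EuclideanSpace ℝ (Fin 4)) (a b : ℕ) : ℝ :=
  ∑ i ∈ Finset.Ico a b, ∑ j ∈ Finset.Ico (i + 1) b, spB θ (f i) (f j)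

theorem spT_eq (θ : ℝ) (f : ℕ → EuclideanSpace ℝ (Fin 4)) (a b : ℕ) :
    (∑ i ∈ Finset.Icc a b, ∑ j ∈ Finset.Icc (i + 1) b,
        (-1 : ℝ) ^ (i + j + 1) * symplecticPairing θ (f i) (f j))
      = - spT θ (fun i => (-1 : ℝ) ^ i • f i) a (b + 1) := by
  unfold spT
  rw [← Finset.sum_neg_distrib]
  refine Finset.sum_congr (by ext; simp only [Finset.mem_Icc, Finset.mem_Ico]; omega) fun i _ => ?_
  rw [← Finset.sum_neg_distrib]
  refine Finset.sum_congr (by ext; simp only [Finset.mem_Icc, Finset.mem_Ico]; omega) fun j _ => ?_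
  simp only [spB_apply, map_smul, LinearMap.smul_apply, smul_eq_mul]
  ring

theorem spT_split (θ : ℝ) (f : ℕ → EuclideanSpace ℝ (Fin 4)) (a m b : ℕ)
    (h1 : a ≤ m) (h2 : m ≤ b) :
    spT θ f a b = spT θ f a m + spT θ f m b
      + spB θ (∑ i ∈ Finset.Ico a m, f i) (∑ j ∈ Finset.Ico m b, f j) := by
  unfold spT
  rw [← Finset.sum_Ico_consecutive _ h1 h2]
  have : ∑ i ∈ Finset.Ico a m, ∑ j ∈ Finset.Ico (i + 1) b, spB θ (f i) (f j)
      = ∑ i ∈ Finset.Ico a m, (∑ j ∈ Finset.Ico (i + 1) m, spB θ (f i) (f j)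
        + ∑ j ∈ Finset.Ico m b, spB θ (f i) (f j)) := by
    refine Finset.sum_congr rfl fun i hi => ?_
    rw [Finset.mem_Ico] at hi
    rw [Finset.sum_Ico_consecutive _ (by omega) h2]
  rw [this, Finset.sum_add_distrib]
  simp only [map_sum, LinearMap.sum_apply]
  rw [Finset.sum_comm (s := Finset.Ico m b)]
  ring

theorem spT_congr (θ : ℝ) (f g : ℕ → EuclideanSpace ℝ (Fin 4)) (a b : ℕ)
    (h : ∀ i, a ≤ i → i < b → f i = g i) : spT θ f a b = spT θ g a b := by
  unfold spT
  refine Finset.sum_congr rfl fun i hi => Finset.sum_congr rfl fun j hj => ?_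
  rw [Finset.mem_Ico] at hi hj
  rw [h i (by omega) (by omega), h j (by omega) (by omega)]

theorem spT_shift (θ : ℝ) (f : ℕ → EuclideanSpace ℝ (Fin 4)) (a b : ℕ) :
    spT θ (fun i => - f (i + 1)) a b = spT θ f (a + 1) (b + 1) := by
  unfold spT
  rw [← Finset.sum_Ico_add']
  refine Finset.sum_congr rfl fun i _ => ?_
  rw [← Finset.sum_Ico_add']
  simp

/-- One step of the first Filk move: contracting a tree line between a generalized
vertex with `p` fields and one with `q - p + 1` fields reproduces the alternating
Moyal phase on the reindexed variables, up to a term linear in the short-variable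
combination `E`. -/
theorem first_filk_move (θ : ℝ) (hθ : 0 < θ) (p q : ℕ)
    (hp : Even p) (hq : Odd q) (hp1 : 1 ≤ p) (hpq : p < q)
    (y : ℕ → EuclideanSpace ℝ (Fin 4)) (E : EuclideanSpace ℝ (Fin 4))
    (z : ℕ → EuclideanSpace ℝ (Fin 4))
    (hz : ∀ i, z i = if i ≤ p - 1 then y i else y (i + 1))
    (hcon : ∑ k ∈ Finset.Icc p q, ((-1 : ℝ) ^ (k - p)) • y k = E) :
    (∑ i ∈ Finset.Icc 1 p, ∑ j ∈ Finset.Icc (i + 1) p,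
        (-1 : ℝ) ^ (i + j + 1) * symplecticPairing θ (y i) (y j))
      + (∑ i ∈ Finset.Icc p q, ∑ j ∈ Finset.Icc (i + 1) q,
        (-1 : ℝ) ^ (i + j + 1) * symplecticPairing θ (y i) (y j))
    = (∑ i ∈ Finset.Icc 1 (q - 1), ∑ j ∈ Finset.Icc (i + 1) (q - 1),
        (-1 : ℝ) ^ (i + j + 1) * symplecticPairing θ (z i) (z j))
      + symplecticPairing θ E
          ((∑ j ∈ Finset.Icc (p + 1) q, ((-1 : ℝ) ^ (j + 1)) • y j)
            - ∑ i ∈ Finset.Icc 1 (p - 1), ((-1 : ℝ) ^ (i + 1)) • y i) := by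
  obtain ⟨m, rfl⟩ : ∃ m, p = m + 1 := ⟨p - 1, by omega⟩
  obtain ⟨r, rfl⟩ : ∃ r, q = r + 1 := ⟨q - 1, by omega⟩
  simp only [Nat.add_sub_cancel] at *
  set u : ℕ → EuclideanSpace ℝ (Fin 4) := fun i => (-1 : ℝ) ^ i • y i with hu
  set w : ℕ → EuclideanSpace ℝ (Fin 4) := fun i => (-1 : ℝ) ^ i • z i with hw
  have hw1 : ∀ i, 1 ≤ i → i < m + 1 → w i = u i := by
    intro i _ hi
    simp only [hw, hu, hz, if_pos (Nat.lt_succ_iff.mp hi)]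
  have hw2 : ∀ i, m + 1 ≤ i → i < r + 1 → w i = - u (i + 1) := by
    intro i hi _
    simp only [hw, hu, hz, if_neg (show ¬ i ≤ m by omega), pow_succ]
    simp
  rw [spT_eq, spT_eq, spT_eq, ← hu, ← hw]
  rw [spT_split θ u 1 (m + 1) (m + 1 + 1) (by omega) (by omega),
    spT_split θ u (m + 1) (m + 1 + 1) (r + 1 + 1) (by omega) (by omega),
    spT_split θ w 1 (m + 1) (r + 1) (by omega) (by omega),
    spT_congr θ w u 1 (m + 1) hw1,
    spT_congr θ w (fun i => - u (i + 1)) (m + 1) (r + 1) hw2, spT_shift]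
  have hA : ∑ i ∈ Finset.Ico 1 (m + 1), w i = ∑ i ∈ Finset.Ico 1 (m + 1), u i :=
    Finset.sum_congr rfl fun i hi => hw1 i (Finset.mem_Ico.mp hi).1 (Finset.mem_Ico.mp hi).2
  have hB : ∑ i ∈ Finset.Ico (m + 1) (r + 1), w i
      = - ∑ i ∈ Finset.Ico (m + 1 + 1) (r + 1 + 1), u i := by
    rw [← Finset.sum_Ico_add' u (m + 1) (r + 1) 1, ← Finset.sum_neg_distrib]
    exact Finset.sum_congr rfl fun i hi =>
      hw2 i (Finset.mem_Ico.mp hi).1 (Finset.mem_Ico.mp hi).2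
  have hE : E = u (m + 1) + ∑ i ∈ Finset.Ico (m + 1 + 1) (r + 1 + 1), u i := by
    rw [← hcon, ← Finset.sum_eq_sum_Ico_succ_bot (by omega)]
    refine Finset.sum_congr (by ext; simp only [Finset.mem_Icc, Finset.mem_Ico]; omega) fun i hi => ?_
    rw [Finset.mem_Ico] at hi
    obtain ⟨k, rfl⟩ : ∃ k, i = m + 1 + k := ⟨i - (m + 1), by omega⟩
    simp only [hu, pow_add (-1 : ℝ) (m + 1) k, hp.neg_one_pow, one_mul, Nat.add_sub_cancel_left]
  have hC : ∑ j ∈ Finset.Icc (m + 1 + 1) (r + 1), ((-1 : ℝ) ^ (j + 1)) • y j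
      = - ∑ i ∈ Finset.Ico (m + 1 + 1) (r + 1 + 1), u i := by
    rw [← Finset.sum_neg_distrib]
    refine Finset.sum_congr (by ext; simp only [Finset.mem_Icc, Finset.mem_Ico]; omega) fun i hi => ?_
    simp [hu, pow_succ]
  have hD : ∑ j ∈ Finset.Icc 1 m, ((-1 : ℝ) ^ (j + 1)) • y j
      = - ∑ i ∈ Finset.Ico 1 (m + 1), u i := by
    rw [← Finset.sum_neg_distrib]
    refine Finset.sum_congr (by ext; simp only [Finset.mem_Icc, Finset.mem_Ico]; omega) fun i hi => ?_
    simp [hu, pow_succ]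
  rw [hA, hB, hC, hD, hE, spB_apply]
  have h0 : spT θ u (m + 1) (m + 1 + 1) = 0 := by simp [spT]
  have h1 : ∑ i ∈ Finset.Ico (m + 1) (m + 1 + 1), u i = u (m + 1) := by simp
  rw [h0, h1]
  generalize ∑ i ∈ Finset.Ico (m + 1 + 1) (r + 1 + 1), u i = B
  generalize ∑ i ∈ Finset.Ico 1 (m + 1), u i = A
  generalize u (m + 1) = Y
  have e1 := spB_anti θ Y A
  have e2 := spB_anti θ B A
  have e3 := spB_anti θ B B
  simp only [map_add, map_sub, map_neg, LinearMap.add_apply]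
  linarith
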